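/- For every line l of the diagram D, the vector w_P = lp̄ + Σ_{x incident to l} x (the sum running over the three points incident to l) is independent of the choice of the line l; moreover ⟨w_P, w_P⟩ = 2 and w_P is orthogonal to all seven points of D. -/

import Mathlib

/- Formalization over the ring ℋ of Hurwitz integers inside the real quaternions. -/

noncomputable section
open Quaternion Finset

/-- The real quaternions ℍ. -/
abbrev Quat := Quaternion ℝ

/-- The quaternion `i`. -/
def qi : Quat := ⟨0, 1, 0, 0⟩
/-- The quaternion `j`. -/
def qj : Quat := ⟨0, 0, 1, 0⟩
/-- The quaternion `k`. -/
def qk : Quat := ⟨0, 0, 0, 1⟩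
/-- `p = 1 - i`. -/
def qp : Quat := 1 - qi

/-- A quaternion is a Hurwitz integer if it is `(a+bi+cj+dk)/2` with
`a,b,c,d` integers which are all congruent mod `2`. -/
def IsHurwitz (q : Quat) : Prop :=
  ∃ a b c d : ℤ, a % 2 = b % 2 ∧ b % 2 = c % 2 ∧ c % 2 = d % 2 ∧
    q = ⟨(a : ℝ) / 2, (b : ℝ) / 2, (c : ℝ) / 2, (d : ℝ) / 2⟩

/-- A unit of the ring ℋ of Hurwitz integers. -/
def IsUnitH (q : Quat) : Prop :=
  IsHurwitz q ∧ ∃ r : Quat, IsHurwitz r ∧ q * r = 1 ∧ r * q = 1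

/-- Membership in the (two-sided) ideal `pℋ`. -/
def InPH (q : Quat) : Prop := ∃ h : Quat, IsHurwitz h ∧ q = qp * h

/-- The ambient space of the lattice `L = 3E₈ ⊕ H`: three pairs (the `E₈` summands)
together with the two coordinates of the hyperbolic cell `H`. -/
abbrev V3 : Type := (Fin 3 → Quat × Quat) × Quat × Quat

/-- The ℋ-valued form on `3E₈ ⊕ H`:  negative definite standard form on each `E₈`
summand and the hyperbolic form `⟨(x₁,x₂),(y₁,y₂)⟩ = x̄₁ p̄ y₂ + x̄₂ p y₁` on `H`. -/
def ip3 (x y : V3) : Quat :=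
  (∑ s : Fin 3, (-(star (x.1 s).1 * (y.1 s).1) - star (x.1 s).2 * (y.1 s).2))
    + star x.2.1 * star qp * y.2.2 + star x.2.2 * qp * y.2.1

/-- Membership in the `E₈` lattice: both coordinates Hurwitz and congruent mod `pℋ`. -/
def memE8 (q : Quat × Quat) : Prop := IsHurwitz q.1 ∧ IsHurwitz q.2 ∧ InPH (q.1 - q.2)

/-- Membership in the lattice `L = 3E₈ ⊕ H`. -/
def memL3 (v : V3) : Prop := (∀ s, memE8 (v.1 s)) ∧ IsHurwitz v.2.1 ∧ IsHurwitz v.2.2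

/-- Right scalar multiplication on the ambient space of `3E₈ ⊕ H`. -/
def rmul3 (v : V3) (q : Quat) : V3 :=
  (fun s => ((v.1 s).1 * q, (v.1 s).2 * q), v.2.1 * q, v.2.2 * q)

/-- The `μ`-reflection in a root `r` : `v ↦ v − r(1−μ)⟨r,v⟩/|r|²`. -/
def refl3 (r : V3) (μ : Quat) (v : V3) : V3 := v - rmul3 r ((1 - μ) * ip3 r v / ip3 r r)

/-- The root `a` of the diagram `D`. -/
def rootA : V3 := (fun _ => (0, 0), 1, -1)
/-- The roots `c_s` of the diagram `D`. -/
def rootC (s : Fin 3) : V3 := (fun t => if t = s then ((1 : Quat), (-1 : Quat)) else 0, 0, 0)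
/-- The roots `e_s` of the diagram `D` (with `(1,1)` in the two other `E₈` slots). -/
def rootE (s : Fin 3) : V3 := (fun t => if t = s then (0 : Quat × Quat) else (1, 1), -qi, -1)
/-- The root `f` of the diagram `D`. -/
def rootF : V3 := (fun _ => (0, qp), -(qi * qp), -qp)
/-- The roots `b_s` of the diagram `D`. -/
def rootB (s : Fin 3) : V3 := (fun t => if t = s then ((0 : Quat), qp) else 0, -1, 0)
/-- The roots `d_s` of the diagram `D`. -/
def rootD (s : Fin 3) : V3 := (fun t => if t = s then (-qp, (0 : Quat)) else 0, 0, 0)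

/-- The set of roots of `L`. -/
def Roots3 : Set V3 := {r | memL3 r ∧ ip3 r r = -2}

/-- The reflection group `R(L)` of `L = 3E₈ ⊕ H`, as the subgroup of permutations of the
ambient space generated by the `μ`-reflections in all roots of `L` (for all units `μ ≠ 1`). -/
def RL3 : Subgroup (Equiv.Perm V3) :=
  Subgroup.closure {g | ∃ r μ, r ∈ Roots3 ∧ IsUnitH μ ∧ μ ≠ 1 ∧ ∀ v, g v = refl3 r μ v}

/-- The seven `points` of the diagram `D`. -/
def Pt : Fin 7 → V3 := ![rootA, rootC 0, rootC 1, rootC 2, rootE 0, rootE 1, rootE 2]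
/-- The seven `lines` of the diagram `D`. -/
def Ln : Fin 7 → V3 := ![rootF, rootB 0, rootB 1, rootB 2, rootD 0, rootD 1, rootD 2]

open Classical in
/-- `w_P = l p̄ + Σ_{x incident to l} x`, computed from the line `Ln s`. -/
def wPof (s : Fin 7) : V3 :=
  rmul3 (Ln s) (star qp) + ∑ t : Fin 7, if ip3 (Pt t) (Ln s) = qp then Pt t else 0

open Classical in
/-- `w_L = x p + Σ_{l incident to x} l`, computed from the point `Pt t`. -/
def wLof (t : Fin 7) : V3 :=
  rmul3 (Pt t) qp + ∑ s : Fin 7, if ip3 (Pt t) (Ln s) = qp then Ln s else 0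

/-- The incidence table: the points on each line. -/
def onLine : Fin 7 → Finset (Fin 7) :=
  ![{1, 2, 3}, {0, 1, 4}, {0, 2, 5}, {0, 3, 6}, {1, 5, 6}, {2, 4, 6}, {3, 4, 5}]

/-- The common value of `w_P`. -/
def wVec : V3 := (fun _ => (1, 1), -2 * qi, -2)

theorem qi_re : qi.re = 0 := rfl
theorem qi_imI : qi.imI = 1 := rfl
theorem qi_imJ : qi.imJ = 0 := rfl
theorem qi_imK : qi.imK = 0 := rfl

theorem qp_ne_zero : qp ≠ 0 := by
  intro h
  have := congrArg QuaternionAlgebra.re h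
  simp [qp, qi_re] at this

theorem star_qi : star qi = -qi := by
  ext <;> simp [qi_re, qi_imI, qi_imJ, qi_imK]

theorem qi_mul_qi : qi * qi = -1 := by
  ext <;> simp [qi_re, qi_imI, qi_imJ, qi_imK]

theorem qi_mul_qi_mul (x : Quat) : qi * (qi * x) = -x := by
  rw [← mul_assoc, qi_mul_qi, neg_one_mul]

theorem ip3_table (t s : Fin 7) :
    ip3 (Pt t) (Ln s) = if t ∈ onLine s then qp else 0 := by
  fin_cases s <;> fin_cases t <;>
    simp [onLine, Pt, Ln, ip3, rootA, rootB, rootC, rootD, rootE, rootF, Fin.sum_univ_three] <;>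
    simp [qp, star_qi, mul_add, add_mul, mul_sub, sub_mul, qi_mul_qi, qi_mul_qi_mul, mul_assoc] <;>
    abel

theorem wPof_eq (s : Fin 7) : wPof s = wVec := by
  have h : ∀ t, (ip3 (Pt t) (Ln s) = qp) ↔ t ∈ onLine s := by
    intro t
    rw [ip3_table]
    split_ifs with h
    · simp [h]
    · simp [h, qp_ne_zero.symm]
  have hw : wPof s = rmul3 (Ln s) (star qp) + ∑ t ∈ onLine s, Pt t := by
    unfold wPof
    simp only [h]
    rw [Finset.sum_ite_mem, Finset.univ_inter]
  rw [hw]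
  have e2 : (2 : Quat) = 1 + 1 := by norm_num
  fin_cases s <;>
    (refine Prod.ext (funext fun u => ?_) (Prod.ext ?_ ?_)) <;>
    (try fin_cases u) <;>
    simp [onLine, wVec, rmul3, Pt, Ln, rootA, rootB, rootC, rootD, rootE, rootF] <;>
    simp [qp, star_qi, e2, mul_add, add_mul, mul_sub, sub_mul, qi_mul_qi, qi_mul_qi_mul,
      mul_assoc] <;>
    abel

theorem wVec_eq : wVec = (fun _ => (1, 1), -(qi + qi), -(1 + 1)) := by
  have e2 : (2 : Quat) = 1 + 1 := by norm_num
  simp [wVec, e2, add_mul]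

theorem ip3_wVec : ip3 wVec wVec = 2 := by
  have e2 : (2 : Quat) = 1 + 1 := by norm_num
  rw [wVec_eq, e2]
  simp only [ip3, qp, Fin.sum_univ_three, star_neg, star_add, star_sub, star_one, star_qi, mul_add,
    add_mul, mul_sub, sub_mul, qi_mul_qi, mul_one, one_mul, neg_mul, mul_neg, neg_neg]
  abel

theorem ip3_Pt_wVec (t : Fin 7) : ip3 (Pt t) wVec = 0 := by
  rw [wVec_eq]
  fin_cases t <;>
    simp [Pt, ip3, rootA, rootC, rootE, Fin.sum_univ_three, -neg_add_rev] <;>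
    simp only [qp, star_neg, star_add, star_sub, star_one, star_qi, mul_add,
      add_mul, mul_sub, sub_mul, qi_mul_qi, mul_one, one_mul, neg_mul, mul_neg, neg_neg] <;>
    abel

/-- The vector `w_P = l p̄ + Σ_{x incident to l} x` does not depend on
the choice of the line `l`, has norm `2`, and is orthogonal to all seven points. -/
theorem wP_well_defined_norm_two_orthogonal_to_points :
    (∀ s s' : Fin 7, wPof s = wPof s') ∧
    (∀ s : Fin 7, ip3 (wPof s) (wPof s) = 2) ∧
    (∀ s t : Fin 7, ip3 (Pt t) (wPof s) = 0) := by
  refine ⟨fun s s' => ?_, fun s => ?_, fun s t => ?_⟩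
  · rw [wPof_eq, wPof_eq]
  · rw [wPof_eq, ip3_wVec]
  · rw [wPof_eq, ip3_Pt_wVec]
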